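/- (Main Theorem, case 0 < |q−1| small; Theorem 5.1) For every parameter tuple (n,m,k,l) as in the context, there exists ε > 0 with ε < 1 such that for every real number q with 0 < |q−1| < ε and every x ∈ {0,1,…,m}, one has p(x;q) ≥ 0; consequently, since Σ_{x=0}^{m} p(x;q) = 1, the function x ↦ p(x;q) is the probability mass function of a probability distribution on {0,1,…,m}. -/

import Mathlib

open Finset

/-- The `q`-integer `[j]_q = 1 + q + ⋯ + q^(j-1)`. -/
noncomputable def qint (q : ℝ) (j : ℕ) : ℝ := ∑ i ∈ Finset.range j, q ^ i

/-- The `q`-factorial `[j]_q! = [1]_q [2]_q ⋯ [j]_q`. -/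
noncomputable def qfact (q : ℝ) (j : ℕ) : ℝ := ∏ i ∈ Finset.range j, qint q (i + 1)

/-- The `q`-binomial coefficient `C_q(a,b)`. -/
noncomputable def qbinom (q : ℝ) (a b : ℕ) : ℝ :=
  if b ≤ a then qfact q a / (qfact q b * qfact q (a - b)) else 0

/-- The `q`-Pochhammer symbol `(a;q)_r = (1-a)(1-aq)⋯(1-aq^(r-1))`. -/
noncomputable def qpoch (a q : ℝ) (r : ℕ) : ℝ := ∏ i ∈ Finset.range r, (1 - a * q ^ i)

/-- The `r`-th term of the terminating balanced `₄φ₃`-series with numerator parameters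
`q^a, q^b, q^(-M), q^(-N)`, denominator parameters `q^(-m), q^(m-n), q^(-M-N)`,
base `q` and argument `q`. -/
noncomputable def hypTerm (q : ℝ) (n m M N : ℕ) (a b : ℤ) (r : ℕ) : ℝ :=
  (qpoch (q ^ a) q r * qpoch (q ^ b) q r * qpoch (q ^ (-(M : ℤ))) q r *
      qpoch (q ^ (-(N : ℤ))) q r * q ^ r) /
    (qpoch q q r * qpoch (q ^ (-(m : ℤ))) q r * qpoch (q ^ ((m : ℤ) - n)) q r *
      qpoch (q ^ (-(M : ℤ) - N)) q r)

/-- The function `p(x;q)` of Definition 1.1 (in its `₄φ₃`-series form), with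
`M = m - l` and `N = n - m - k + l`. -/
noncomputable def pq (q : ℝ) (n m k l x : ℕ) : ℝ :=
  qbinom q (n - k) (m - l) * (qbinom q n x / qbinom q n m) * q ^ x *
    (qint q (n - 2 * x + 1) / qint q (n - x + 1)) *
    ∑ r ∈ Finset.range (min x (min (m - l) (n + l - m - k)) + 1),
      hypTerm q n m (m - l) (n + l - m - k) (-(x : ℤ)) ((x : ℤ) - n - 1) r

/-!
Write `M = m - l` and `N = n - m - k + l`. Up to positive factors `p(x;q)` is the series
`qRacahSeries q n m M N x`, so positivity of `p` is positivity of this series, for fixed `M ≤ m`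
and `N ≤ n - m`. A contiguous relation expresses the series at `(n + 1, m + 1, x + 1)` as a
combination of those at `(n, m, x + 1)` and `(n, m, x)` whose coefficients are nonnegative for every
`q > 0`, and the symmetry `(m, M) ↔ (n - m, N)` gives the analogous relation for `(n + 1, m)`. Both
lead down to `m = M`, `n - m = N`, where two pairs of parameters cancel and the `q`-Chu–Vandermonde
formula evaluates the series to `0` for `x > 0` and to `1` for `x = 0`.

For the total mass, exchange the two summations: the sum over `x` telescopes, and what remains is
again a `q`-Chu–Vandermonde sum, equal to `1 / C_q(n - k, m - l)`.
-/

section QPochhammer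

variable {a q : ℝ} {r : ℕ}

lemma qpoch_zero (a q : ℝ) : qpoch a q 0 = 1 := prod_range_zero _

lemma qpoch_succ (a q : ℝ) (r : ℕ) : qpoch a q (r + 1) = qpoch a q r * (1 - a * q ^ r) :=
  prod_range_succ _ _

lemma qpoch_succ_left (a q : ℝ) (r : ℕ) :
    qpoch a q (r + 1) = (1 - a) * qpoch (a * q) q r := by
  simp only [qpoch, prod_range_succ', pow_zero, mul_one, pow_succ', mul_assoc]
  rw [mul_comm]

lemma qpoch_mul_base (ha : a ≠ 1) :
    qpoch (a * q) q r = qpoch a q r * (1 - a * q ^ r) / (1 - a) := by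
  rw [eq_div_iff (sub_ne_zero.2 ha.symm), ← qpoch_succ, qpoch_succ_left, mul_comm]

lemma qpoch_ne_zero_of_le {s : ℕ} (hrs : r ≤ s) (hs : qpoch a q s ≠ 0) : qpoch a q r ≠ 0 :=
  ne_zero_of_dvd_ne_zero hs (prod_dvd_prod_of_subset _ _ _ (range_mono hrs))

lemma qpoch_zpow_ne_zero (hq : 0 < q) (hq1 : q ≠ 1) {j : ℤ} (hj : ∀ i < r, j + i ≠ 0) :
    qpoch (q ^ j) q r ≠ 0 := by
  refine prod_ne_zero_iff.2 fun i hi => ?_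
  rw [← zpow_natCast, ← zpow_add₀ hq.ne']
  exact sub_ne_zero.2 fun h =>
    hj i (mem_range.1 hi) ((zpow_eq_one_iff_right₀ hq.le hq1).1 h.symm)

lemma qpoch_self_ne_zero (hq : 0 < q) (hq1 : q ≠ 1) (r : ℕ) : qpoch q q r ≠ 0 := by
  simpa only [zpow_one] using qpoch_zpow_ne_zero (j := 1) hq hq1 fun i _ => by omega

lemma qpoch_zpow_neg_eq_zero (hq : q ≠ 0) {j : ℕ} (hj : j < r) :
    qpoch (q ^ (-(j : ℤ))) q r = 0 := by
  refine prod_eq_zero (mem_range.2 hj) ?_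
  rw [← zpow_natCast, ← zpow_add₀ hq, neg_add_cancel, zpow_zero, sub_self]

end QPochhammer

section QBinomial

variable {q : ℝ}

lemma qint_eq_div (hq1 : q ≠ 1) (j : ℕ) : qint q j = (1 - q ^ j) / (1 - q) := by
  rw [eq_div_iff (sub_ne_zero.2 hq1.symm), qint, geom_sum_mul_neg]

lemma one_sub_zpow_neg (hq : q ≠ 0) (j : ℕ) :
    1 - q ^ (-(j : ℤ)) = -(q ^ (-(j : ℤ)) * ((1 - q) * qint q j)) := by
  rw [qint, mul_neg_geom_sum, zpow_neg, zpow_natCast, mul_sub, inv_mul_cancel₀ (pow_ne_zero j hq)]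
  ring

lemma qint_pos (hq : 0 < q) {j : ℕ} (hj : j ≠ 0) : 0 < qint q j :=
  sum_pos (fun _ _ => by positivity) (nonempty_range_iff.2 hj)

lemma qfact_pos (hq : 0 < q) (j : ℕ) : 0 < qfact q j :=
  prod_pos fun _ _ => qint_pos hq (Nat.succ_ne_zero _)

lemma qfact_succ (q : ℝ) (j : ℕ) : qfact q (j + 1) = qfact q j * qint q (j + 1) :=
  prod_range_succ _ _

lemma qbinom_add (q : ℝ) (a b : ℕ) :
    qbinom q (a + b) a = qfact q (a + b) / (qfact q a * qfact q b) := by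
  rw [qbinom, if_pos (Nat.le_add_right a b), Nat.add_sub_cancel_left]

lemma qbinom_pos (hq : 0 < q) {a b : ℕ} (h : b ≤ a) : 0 < qbinom q a b := by
  rw [qbinom, if_pos h]
  exact div_pos (qfact_pos hq a) (mul_pos (qfact_pos hq b) (qfact_pos hq (a - b)))

lemma qbinom_zero_right (hq : 0 < q) (a : ℕ) : qbinom q a 0 = 1 := by
  have hfact := (qfact_pos hq a).ne'
  rw [qbinom, if_pos a.zero_le, Nat.sub_zero, show qfact q 0 = 1 from prod_range_zero _, one_mul,
    div_self hfact]

lemma qbinom_succ_succ_mul_qint (hq : 0 < q) (a b : ℕ) :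
    qbinom q (a + 1 + b) (a + 1) * qint q (a + 1) = qbinom q (a + b) a * qint q (a + b + 1) := by
  have hint := (qint_pos hq a.succ_ne_zero).ne'
  rw [qbinom_add, qbinom_add, Nat.add_right_comm, qfact_succ, qfact_succ]
  field_simp

lemma qbinom_succ_right_mul_qint (hq : 0 < q) {n j : ℕ} (hj : j < n) :
    qbinom q n (j + 1) * qint q (j + 1) = qbinom q n j * qint q (n - j) := by
  obtain ⟨d, rfl⟩ := Nat.exists_eq_add_of_lt hj
  have hint_j := (qint_pos hq j.succ_ne_zero).ne'
  have hint_d := (qint_pos hq d.succ_ne_zero).ne'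
  rw [show j + d + 1 - j = d + 1 by omega, add_assoc, qbinom_add, ← add_assoc,
    Nat.add_right_comm, qbinom_add, qfact_succ q j, qfact_succ q d]
  field_simp

lemma qbinom_eq_qbinom_succ_mul (hq : 0 < q) (hq1 : q ≠ 1) {n j : ℕ} (hj : j < n) :
    qbinom q n j = qbinom q n (j + 1) * ((1 - q ^ (j + 1)) / (1 - q ^ (n - j))) := by
  rw [← div_div_div_cancel_right₀ (sub_ne_zero.2 hq1.symm), ← qint_eq_div hq1, ← qint_eq_div hq1,
    ← mul_div_assoc, qbinom_succ_right_mul_qint hq hj,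
    mul_div_cancel_right₀ _ (qint_pos hq (Nat.sub_ne_zero_of_lt hj)).ne']

lemma qbinom_mul_qpoch_zpow_neg (hq : 0 < q) (M N : ℕ) :
    qbinom q (M + N) M * (qpoch (q ^ (-(M : ℤ))) q M * (q ^ (-(N : ℤ))) ^ M) =
      qpoch (q ^ (-(M : ℤ) - N)) q M := by
  induction M with
  | zero => simp [qpoch_zero, qbinom_zero_right hq]
  | succ M ih =>
    have hM : q ^ (-((M + 1 : ℕ) : ℤ)) * q = q ^ (-(M : ℤ)) := by
      rw [← zpow_add_one₀ hq.ne']; congr 1; push_cast; ring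
    have hMN : q ^ (-((M + N + 1 : ℕ) : ℤ)) * q = q ^ (-(M : ℤ) - N) := by
      rw [← zpow_add_one₀ hq.ne']; congr 1; push_cast; ring
    have hsplit : q ^ (-((M + N + 1 : ℕ) : ℤ)) = q ^ (-((M + 1 : ℕ) : ℤ)) * q ^ (-(N : ℤ)) := by
      rw [← zpow_add₀ hq.ne']; congr 1; push_cast; ring
    have hexp : -((M + 1 : ℕ) : ℤ) - N = -((M + N + 1 : ℕ) : ℤ) := by push_cast; ring
    rw [hexp, qpoch_succ_left, qpoch_succ_left, hM, hMN, ← ih, one_sub_zpow_neg hq.ne',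
      one_sub_zpow_neg hq.ne', hsplit, pow_succ]
    linear_combination -(q ^ (-((M + 1 : ℕ) : ℤ)) * (1 - q) * qpoch (q ^ (-(M : ℤ))) q M *
      (q ^ (-(N : ℤ))) ^ M * q ^ (-(N : ℤ))) * qbinom_succ_succ_mul_qint hq M N

end QBinomial

section ChuVandermonde

/-- The `r`-th term of the basic hypergeometric series `₂φ₁(a, b; c; q, q)`. -/
noncomputable def twoPhiOneTerm (a b c q : ℝ) (r : ℕ) : ℝ :=
  qpoch a q r * qpoch b q r * q ^ r / (qpoch q q r * qpoch c q r)

variable {a b c d q : ℝ}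

lemma twoPhiOneTerm_zero (a b c q : ℝ) : twoPhiOneTerm a b c q 0 = 1 := by
  simp [twoPhiOneTerm, qpoch_zero]

lemma twoPhiOneTerm_succ (r : ℕ) (hq : qpoch q q (r + 1) ≠ 0) (hc : qpoch c q (r + 1) ≠ 0) :
    twoPhiOneTerm a b c q (r + 1) = twoPhiOneTerm (a * q) b c q (r + 1) -
      a * q * (1 - b) / (1 - c) * twoPhiOneTerm (a * q) (b * q) (c * q) q r := by
  have hc' := hc
  rw [qpoch_succ_left] at hc'
  rw [qpoch_succ] at hq
  have hc1 := left_ne_zero_of_mul hc'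
  obtain ⟨hqr, hq1⟩ := mul_ne_zero_iff.1 hq
  simp only [twoPhiOneTerm, qpoch_succ_left a, qpoch_succ_left b, qpoch_succ_left c,
    qpoch_succ (a * q), qpoch_succ q]
  field_simp
  ring

lemma twoPhiOneTerm_comm (a b c q : ℝ) (r : ℕ) :
    twoPhiOneTerm a b c q r = twoPhiOneTerm b a c q r := by
  rw [twoPhiOneTerm, twoPhiOneTerm, mul_comm (qpoch a q r)]

lemma twoPhiOneTerm_zpow_neg_eq_zero (hq : q ≠ 0) {M r : ℕ} (hr : M < r) :
    twoPhiOneTerm (q ^ (-(M : ℤ))) b c q r = 0 := by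
  rw [twoPhiOneTerm, qpoch_zpow_neg_eq_zero hq hr, zero_mul, zero_mul, zero_div]

lemma sum_twoPhiOneTerm_contiguous (R : ℕ) (hq : qpoch q q R ≠ 0) (hc : qpoch c q R ≠ 0) :
    ∑ r ∈ range (R + 1), twoPhiOneTerm a b c q r =
      ∑ r ∈ range (R + 1), twoPhiOneTerm (a * q) b c q r -
        a * q * (1 - b) / (1 - c) *
          ∑ r ∈ range R, twoPhiOneTerm (a * q) (b * q) (c * q) q r := by
  have hterm : ∀ r ∈ range R, twoPhiOneTerm a b c q (r + 1) = _ := fun r hr =>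
    twoPhiOneTerm_succ r (qpoch_ne_zero_of_le (mem_range.1 hr) hq)
      (qpoch_ne_zero_of_le (mem_range.1 hr) hc)
  rw [sum_range_succ', sum_range_succ', sum_congr rfl hterm, sum_sub_distrib, mul_sum,
    twoPhiOneTerm_zero, twoPhiOneTerm_zero]
  ring

/-- The `q`-Chu–Vandermonde formula; its third parameter is written `b * d` in order to allow
`b = 0`. -/
theorem sum_twoPhiOneTerm_zpow_neg (hq : q ≠ 0) (M : ℕ) (hqM : qpoch q q M ≠ 0)
    (hc : qpoch (b * d) q M ≠ 0) :
    ∑ r ∈ range (M + 1), twoPhiOneTerm (q ^ (-(M : ℤ))) b (b * d) q r =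
      qpoch d q M * b ^ M / qpoch (b * d) q M := by
  induction M generalizing b with
  | zero => simp [twoPhiOneTerm_zero, qpoch_zero]
  | succ M ih =>
    have hqM' : qpoch q q M ≠ 0 := qpoch_ne_zero_of_le M.le_succ hqM
    obtain ⟨hcM, hc_last⟩ := mul_ne_zero_iff.1 (qpoch_succ (b * d) q M ▸ hc)
    have hcqM := right_ne_zero_of_mul (qpoch_succ_left (b * d) q M ▸ hc)
    have hexp : q ^ (-((M + 1 : ℕ) : ℤ)) * q = q ^ (-(M : ℤ)) := by
      rw [← zpow_add_one₀ hq]; congr 1; push_cast; ring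
    have hcancel : q ^ (-(M : ℤ)) * q ^ M = 1 := by
      rw [zpow_neg, zpow_natCast, inv_mul_cancel₀ (pow_ne_zero M hq)]
    have hfirst : qpoch d q M * b ^ M / qpoch (b * d) q M =
        qpoch d q M * b ^ M * (1 - b * d * q ^ M) / qpoch (b * d) q (M + 1) := by
      rw [qpoch_succ (b * d), mul_div_mul_right _ _ hc_last]
    have hsecond : q ^ (-(M : ℤ)) * (1 - b) / (1 - b * d) *
          (qpoch d q M * (b * q) ^ M / qpoch (b * d * q) q M) =
        qpoch d q M * b ^ M * (1 - b) / qpoch (b * d) q (M + 1) := by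
      rw [qpoch_succ_left (b * d), div_mul_div_comm, mul_pow]
      congr 1
      linear_combination (1 - b) * qpoch d q M * b ^ M * hcancel
    rw [mul_right_comm] at hcqM
    rw [sum_twoPhiOneTerm_contiguous (M + 1) hqM hc, hexp, sum_range_succ,
      twoPhiOneTerm_zpow_neg_eq_zero hq M.lt_succ_self, add_zero, ih hqM' hcM,
      mul_right_comm b d q, ih hqM' hcqM, mul_right_comm b q d, hfirst, hsecond, qpoch_succ d]
    ring

lemma sum_twoPhiOneTerm_zpow_neg_zpow_neg (hq : 0 < q) (hq1 : q ≠ 1) (M N : ℕ) :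
    ∑ r ∈ range (min M N + 1),
      twoPhiOneTerm (q ^ (-(M : ℤ))) (q ^ (-(N : ℤ))) (q ^ (-(M : ℤ) - N)) q r =
      (qbinom q (M + N) M)⁻¹ := by
  have hpoch : qpoch (q ^ (-(M : ℤ) - N)) q M ≠ 0 :=
    qpoch_zpow_ne_zero hq hq1 fun i _ => by omega
  have hc : q ^ (-(M : ℤ) - N) = q ^ (-(N : ℤ)) * q ^ (-(M : ℤ)) := by
    rw [← zpow_add₀ hq.ne', neg_add_eq_sub, neg_sub_comm]
  have hvanish : ∀ r ≥ min M N + 1,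
      twoPhiOneTerm (q ^ (-(M : ℤ))) (q ^ (-(N : ℤ))) (q ^ (-(M : ℤ) - N)) q r = 0 := by
    intro r hr
    rcases min_lt_iff.1 (Nat.lt_of_succ_le hr) with hMr | hNr
    · exact twoPhiOneTerm_zpow_neg_eq_zero hq.ne' hMr
    · exact twoPhiOneTerm_comm _ _ _ q r ▸ twoPhiOneTerm_zpow_neg_eq_zero hq.ne' hNr
  rw [← eventually_constant_sum hvanish (Nat.succ_le_succ (min_le_left M N)), hc,
    sum_twoPhiOneTerm_zpow_neg hq.ne' M (qpoch_self_ne_zero hq hq1 M) (hc ▸ hpoch), ← hc,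
    ← qbinom_mul_qpoch_zpow_neg hq, div_mul_cancel_right₀]
  exact right_ne_zero_of_mul (qbinom_mul_qpoch_zpow_neg hq M N ▸ hpoch)

end ChuVandermonde

section Contiguous

/-- The coefficient in the contiguous relation `contiguous_qpoch_mul_qpoch_div_qpoch`, of the
summand in which both `B` and `C` are multiplied by `q`. Exchanging `A` and `B` gives the
coefficient of the other summand. -/
noncomputable def contiguousCoeff (A B C : ℝ) : ℝ := (A - C) / (A - B) * ((1 - B) / (1 - C))

lemma contiguous_qpoch_mul_qpoch_div_qpoch {A B C q : ℝ} {r : ℕ} (hA : A ≠ 1) (hB : B ≠ 1)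
    (hAB : A ≠ B) (hC : qpoch C q (r + 1) ≠ 0) :
    qpoch A q r * qpoch B q r / qpoch C q r =
      contiguousCoeff A B C * (qpoch A q r * qpoch (B * q) q r / qpoch (C * q) q r) +
      contiguousCoeff B A C * (qpoch (A * q) q r * qpoch B q r / qpoch (C * q) q r) := by
  have hC1 : 1 - C ≠ 0 := left_ne_zero_of_mul (qpoch_succ_left C q r ▸ hC)
  obtain ⟨hCr, hC_last⟩ := mul_ne_zero_iff.1 (qpoch_succ C q r ▸ hC)
  have hA1 : 1 - A ≠ 0 := sub_ne_zero.2 hA.symm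
  have hB1 : 1 - B ≠ 0 := sub_ne_zero.2 hB.symm
  have hABsub : A - B ≠ 0 := sub_ne_zero.2 hAB
  -- Lagrange interpolation of the affine function `C ↦ 1 - C * q ^ r` at the nodes `A` and `B`.
  have hinterp : (A - C) / (A - B) * (1 - B * q ^ r) + (B - C) / (B - A) * (1 - A * q ^ r) =
      1 - C * q ^ r := by
    rw [← neg_sub A B]
    field_simp
    ring
  rw [qpoch_mul_base hA, qpoch_mul_base hB, qpoch_mul_base (sub_ne_zero.1 hC1).symm]
  calc qpoch A q r * qpoch B q r / qpoch C q r
      = qpoch A q r * qpoch B q r * (1 - C * q ^ r) / (qpoch C q r * (1 - C * q ^ r)) := by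
        rw [mul_div_mul_right _ _ hC_last]
    _ = _ := by
        rw [contiguousCoeff, contiguousCoeff]
        nth_rewrite 1 [← hinterp]
        field_simp

lemma zpow_sub_div_zpow_sub_nonneg {q : ℝ} (hq : 0 < q) {a b c d : ℤ} (hab : b ≤ a) (hcd : d ≤ c) :
    0 ≤ (q ^ a - q ^ b) / (q ^ c - q ^ d) := by
  rcases le_total q 1 with h | h
  · exact div_nonneg_of_nonpos (sub_nonpos.2 (zpow_le_zpow_right_of_le_one₀ hq h hab))
      (sub_nonpos.2 (zpow_le_zpow_right_of_le_one₀ hq h hcd))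
  · exact div_nonneg (sub_nonneg.2 (zpow_le_zpow_right₀ h hab))
      (sub_nonneg.2 (zpow_le_zpow_right₀ h hcd))

variable {q : ℝ} {a b c : ℤ}

lemma contiguousCoeff_zpow_nonneg_of_ge (hq : 0 < q) (hb : b ≤ 0) (hc : c ≤ 0) (hca : c ≤ a)
    (hba : b ≤ a) : 0 ≤ contiguousCoeff (q ^ a) (q ^ b) (q ^ c) := by
  rw [contiguousCoeff, ← zpow_zero q]
  exact mul_nonneg (zpow_sub_div_zpow_sub_nonneg hq hca hba) (zpow_sub_div_zpow_sub_nonneg hq hb hc)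

lemma contiguousCoeff_zpow_nonneg_of_le (hq : 0 < q) (hb : b ≤ 0) (hc : c ≤ 0) (hac : a ≤ c)
    (hab : a ≤ b) : 0 ≤ contiguousCoeff (q ^ a) (q ^ b) (q ^ c) := by
  rw [contiguousCoeff, ← neg_sub (q ^ c), ← neg_sub (q ^ b), neg_div_neg_eq, ← zpow_zero q]
  exact mul_nonneg (zpow_sub_div_zpow_sub_nonneg hq hac hab) (zpow_sub_div_zpow_sub_nonneg hq hb hc)

lemma hypTerm_succ_succ (hq : 0 < q) (hq1 : q ≠ 1) (n M N : ℕ) {m r : ℕ} (hr : r ≤ m)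
    (ha : a ≠ 0) (hb : b ≠ 0) (hab : a ≠ b) :
    hypTerm q (n + 1) (m + 1) M N a b r =
      contiguousCoeff (q ^ a) (q ^ b) (q ^ (-((m + 1 : ℕ) : ℤ))) *
          hypTerm q n m M N a (b + 1) r +
        contiguousCoeff (q ^ b) (q ^ a) (q ^ (-((m + 1 : ℕ) : ℤ))) *
          hypTerm q n m M N (a + 1) b r := by
  have hrel := contiguous_qpoch_mul_qpoch_div_qpoch (mt (zpow_eq_one_iff_right₀ hq.le hq1).1 ha)
    (mt (zpow_eq_one_iff_right₀ hq.le hq1).1 hb) ((zpow_right_injective₀ hq hq1).ne hab)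
    (qpoch_zpow_ne_zero (j := -((m + 1 : ℕ) : ℤ)) (r := r + 1) hq hq1 fun i _ => by omega)
  have hm : -((m + 1 : ℕ) : ℤ) + 1 = -(m : ℤ) := by push_cast; ring
  have hmn : ((m + 1 : ℕ) : ℤ) - (n + 1 : ℕ) = m - n := by push_cast; ring
  rw [← zpow_add_one₀ hq.ne', ← zpow_add_one₀ hq.ne', ← zpow_add_one₀ hq.ne', hm] at hrel
  simp only [hypTerm, hmn]
  linear_combination (qpoch (q ^ (-(M : ℤ))) q r * qpoch (q ^ (-(N : ℤ))) q r * q ^ r /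
    (qpoch q q r * qpoch (q ^ ((m : ℤ) - n)) q r * qpoch (q ^ (-(M : ℤ) - N)) q r)) * hrel

end Contiguous

section Series

/-- The `₄φ₃`-series in the definition of `pq`, with `M` and `N` as independent parameters. The
summation range does not depend on `x`: the terms with `r > x` vanish. -/
noncomputable def qRacahSeries (q : ℝ) (n m M N x : ℕ) : ℝ :=
  ∑ r ∈ range (min M N + 1), hypTerm q n m M N (-(x : ℤ)) ((x : ℤ) - n - 1) r

variable {q : ℝ} {n m M N x : ℕ}

lemma hypTerm_eq_zero_of_lt (hq : q ≠ 0) {r : ℕ} (hr : x < r) (b : ℤ) :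
    hypTerm q n m M N (-(x : ℤ)) b r = 0 := by
  simp only [hypTerm, qpoch_zpow_neg_eq_zero hq hr, zero_mul, zero_div]

lemma hypTerm_swap (q : ℝ) (m m' M N : ℕ) (a b : ℤ) (r : ℕ) :
    hypTerm q (m + m') m M N a b r = hypTerm q (m' + m) m' N M a b r := by
  have hm : (m : ℤ) - (m + m' : ℕ) = -m' := by push_cast; ring
  have hm' : (m' : ℤ) - (m' + m : ℕ) = -m := by push_cast; ring
  rw [hypTerm, hypTerm, hm, hm', neg_sub_comm]
  ring

lemma qRacahSeries_swap (q : ℝ) (m m' M N x : ℕ) :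
    qRacahSeries q (m + m') m M N x = qRacahSeries q (m' + m) m' N M x := by
  rw [qRacahSeries, qRacahSeries, min_comm, Nat.add_comm m' m]
  refine sum_congr rfl fun r _ => ?_
  rw [hypTerm_swap, Nat.add_comm m' m]

lemma sum_range_min_hypTerm (hq : q ≠ 0) :
    ∑ r ∈ range (min x (min M N) + 1), hypTerm q n m M N (-(x : ℤ)) ((x : ℤ) - n - 1) r =
      qRacahSeries q n m M N x := by
  refine sum_subset (range_mono (Nat.succ_le_succ (min_le_right _ _))) fun r hr hrx => ?_
  rw [mem_range] at hr hrx
  exact hypTerm_eq_zero_of_lt hq (by omega) _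

lemma qRacahSeries_zero_right (hq : q ≠ 0) (n m M N : ℕ) : qRacahSeries q n m M N 0 = 1 := by
  rw [← sum_range_min_hypTerm hq]
  simp [hypTerm, qpoch_zero]

lemma qRacahSeries_succ_succ_succ (hq : 0 < q) (hq1 : q ≠ 1) (N : ℕ) (hM : M ≤ m)
    (hx : 2 * x < n) :
    qRacahSeries q (n + 1) (m + 1) M N (x + 1) =
      contiguousCoeff (q ^ (-((x + 1 : ℕ) : ℤ))) (q ^ ((x : ℤ) - n - 1))
          (q ^ (-((m + 1 : ℕ) : ℤ))) * qRacahSeries q n m M N (x + 1) +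
        contiguousCoeff (q ^ ((x : ℤ) - n - 1)) (q ^ (-((x + 1 : ℕ) : ℤ)))
          (q ^ (-((m + 1 : ℕ) : ℤ))) * qRacahSeries q n m M N x := by
  have hb : ((x + 1 : ℕ) : ℤ) - (n + 1 : ℕ) - 1 = x - n - 1 := by push_cast; ring
  have hb_succ : (x : ℤ) - n - 1 + 1 = (x + 1 : ℕ) - n - 1 := by push_cast; ring
  have ha_succ : -((x + 1 : ℕ) : ℤ) + 1 = -x := by push_cast; ring
  simp only [qRacahSeries, mul_sum, ← sum_add_distrib, hb]
  refine sum_congr rfl fun r hr => ?_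
  rw [mem_range] at hr
  rw [hypTerm_succ_succ hq hq1 n M N (by omega) (by omega) (by omega) (by omega), hb_succ, ha_succ]

lemma qRacahSeries_self_eq_zero (hq : 0 < q) (hq1 : q ≠ 1) (hx : x ≠ 0) (hxM : x ≤ M)
    (hxN : x ≤ N) : qRacahSeries q (M + N) M M N x = 0 := by
  have hc : q ^ (-(M : ℤ) - N) = q ^ ((x : ℤ) - (M + N : ℕ) - 1) * q ^ (-((x - 1 : ℕ) : ℤ)) := by
    rw [← zpow_add₀ hq.ne']; congr 1; omega
  have hpoch : ∀ r ≤ x, ∀ j : ℤ, j + x ≤ 0 → qpoch (q ^ j) q r ≠ 0 := fun r hr j hj =>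
    qpoch_zpow_ne_zero hq hq1 fun i _ => by omega
  have hmn : (M : ℤ) - (M + N : ℕ) = -N := by push_cast; ring
  have hterm : ∀ r ∈ range (x + 1), hypTerm q (M + N) M M N (-(x : ℤ)) (x - (M + N : ℕ) - 1) r =
      twoPhiOneTerm (q ^ (-(x : ℤ))) (q ^ ((x : ℤ) - (M + N : ℕ) - 1)) (q ^ (-(M : ℤ) - N))
        q r := by
    intro r hr
    have hrx : r ≤ x := Nat.le_of_lt_succ (mem_range.1 hr)
    have hM := hpoch r hrx (-(M : ℤ)) (by omega)
    have hN := hpoch r hrx (-(N : ℤ)) (by omega)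
    rw [hypTerm, twoPhiOneTerm, hmn]
    field_simp
  rw [← sum_range_min_hypTerm hq.ne', min_eq_left (le_min hxM hxN), sum_congr rfl hterm, hc,
    sum_twoPhiOneTerm_zpow_neg hq.ne' x (qpoch_self_ne_zero hq hq1 x)
      (hc ▸ hpoch x le_rfl _ (by omega)),
    qpoch_zpow_neg_eq_zero hq.ne' (by omega), zero_mul, zero_div]

lemma qRacahSeries_nonneg_succ_left (hq : 0 < q) (hq1 : q ≠ 1) {m' : ℕ} (hM : M ≤ m)
    (hnonneg : ∀ x ≤ m, x ≤ m' → 0 ≤ qRacahSeries q (m + m') m M N x) (hxm : x ≤ m + 1)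
    (hxm' : x ≤ m') : 0 ≤ qRacahSeries q (m + 1 + m') (m + 1) M N x := by
  rcases x with _ | x
  · exact (qRacahSeries_zero_right hq.ne' _ _ M N).symm ▸ zero_le_one
  rw [Nat.add_right_comm, qRacahSeries_succ_succ_succ hq hq1 N hM (by omega)]
  refine add_nonneg ?_ (mul_nonneg
    (contiguousCoeff_zpow_nonneg_of_le hq (by omega) (by omega) (by omega) (by omega))
    (hnonneg x (by omega) (by omega)))
  rcases hxm.lt_or_eq with hlt | heq
  · exact mul_nonneg
      (contiguousCoeff_zpow_nonneg_of_ge hq (by omega) (by omega) (by omega) (by omega))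
      (hnonneg (x + 1) (Nat.le_of_lt_succ hlt) hxm')
  · -- The induction hypothesis does not cover `x + 1 = m + 1`, but here the coefficient vanishes.
    rw [heq, contiguousCoeff, sub_self, zero_div, zero_mul, zero_mul]

theorem qRacahSeries_nonneg (hq : 0 < q) (hq1 : q ≠ 1) {m' : ℕ} (hM : M ≤ m) (hN : N ≤ m')
    (hxm : x ≤ m) (hxm' : x ≤ m') : 0 ≤ qRacahSeries q (m + m') m M N x := by
  induction m, hM using Nat.le_induction generalizing x with
  | succ m hM ih => exact qRacahSeries_nonneg_succ_left hq hq1 hM (fun x => ih) hxm hxm'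
  | base =>
    rw [qRacahSeries_swap]
    induction m', hN using Nat.le_induction generalizing x with
    | succ m' hN ih =>
      exact qRacahSeries_nonneg_succ_left hq hq1 hN (fun x hx hx' => ih hx' hx) hxm' hxm
    | base =>
      rcases eq_or_ne x 0 with rfl | hx
      · exact (qRacahSeries_zero_right hq.ne' _ _ N M).symm ▸ zero_le_one
      · exact (qRacahSeries_self_eq_zero hq hq1 hx hxm' hxm).ge

end Series

section TotalMass

/-- The weight of `x` in the `q`-Racah distribution, so that `pq` is a constant multiple of
`qRacahWeight q n x * qRacahSeries q n m M N x`. For `2 * x ≤ n` it equals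
`C_q(n, x) - C_q(n, x - 1)`. -/
noncomputable def qRacahWeight (q : ℝ) (n x : ℕ) : ℝ :=
  qbinom q n x * q ^ x * (qint q (n - 2 * x + 1) / qint q (n - x + 1))

variable {q : ℝ} {n m M N x : ℕ}

lemma qRacahWeight_nonneg (hq : 0 < q) (hx : x ≤ n) : 0 ≤ qRacahWeight q n x := by
  have hbinom := qbinom_pos hq hx
  have hnum := qint_pos hq (n - 2 * x).succ_ne_zero
  have hden := qint_pos hq (n - x).succ_ne_zero
  rw [qRacahWeight]
  positivity

lemma qRacahWeight_eq (hq1 : q ≠ 1) (hx : 2 * x ≤ n) :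
    qRacahWeight q n x = qbinom q n x * ((q ^ x - q ^ (n - x + 1)) / (1 - q ^ (n - x + 1))) := by
  have hpow : q ^ (n - x + 1) = q ^ x * q ^ (n - 2 * x + 1) := by
    rw [← pow_add]; congr 1; omega
  rw [qRacahWeight, qint_eq_div hq1, qint_eq_div hq1,
    div_div_div_cancel_right₀ (sub_ne_zero.2 hq1.symm), hpow]
  ring

lemma qRacahWeight_succ_mul_qpoch (hq : 0 < q) (hq1 : q ≠ 1) (r : ℕ) (hm : 2 * (m + 1) ≤ n) :
    qRacahWeight q n (m + 1) *
        (qpoch (q ^ (-((m + 1 : ℕ) : ℤ))) q r * qpoch (q ^ ((m : ℤ) - n)) q r) =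
      qbinom q n (m + 1) *
          (qpoch (q ^ (-((m + 1 : ℕ) : ℤ))) q r * qpoch (q ^ (((m + 1 : ℕ) : ℤ) - n)) q r) -
        qbinom q n m * (qpoch (q ^ (-(m : ℤ))) q r * qpoch (q ^ ((m : ℤ) - n)) q r) := by
  have hpow_m : q ^ (-((m + 1 : ℕ) : ℤ)) = (q ^ (m + 1))⁻¹ := by rw [zpow_neg, zpow_natCast]
  have hpow_n : q ^ ((m : ℤ) - n) = (q ^ (n - m))⁻¹ := by
    rw [← zpow_natCast, ← zpow_neg]; congr 1; omega
  have hshift_m : q ^ (-(m : ℤ)) = q ^ (-((m + 1 : ℕ) : ℤ)) * q := by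
    rw [← zpow_add_one₀ hq.ne']; congr 1; push_cast; ring
  have hshift_n : q ^ (((m + 1 : ℕ) : ℤ) - n) = q ^ ((m : ℤ) - n) * q := by
    rw [← zpow_add_one₀ hq.ne']; congr 1; push_cast; ring
  have hone_sub_ne : ∀ j ≠ 0, 1 - q ^ j ≠ 0 := fun j hj h =>
    hq1 ((pow_eq_one_iff_of_nonneg hq.le hj).1 (sub_eq_zero.1 h).symm)
  have hm_ne := hone_sub_ne (m + 1) m.succ_ne_zero
  have hn_ne := hone_sub_ne (n - m) (by omega)
  have hq_pow_m := (pow_pos hq (m + 1)).ne'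
  have hq_pow_n := (pow_pos hq (n - m)).ne'
  have hzpow_ne : ∀ j : ℤ, j ≠ 0 → q ^ j ≠ 1 := fun j => mt (zpow_eq_one_iff_right₀ hq.le hq1).1
  rw [hshift_m, hshift_n, qpoch_mul_base (hzpow_ne _ (by omega)),
    qpoch_mul_base (hzpow_ne _ (by omega)), hpow_m, hpow_n, qRacahWeight_eq hq1 hm,
    qbinom_eq_qbinom_succ_mul hq hq1 (j := m) (by omega), show n - (m + 1) + 1 = n - m by omega]
  generalize q ^ (m + 1) = y at *
  generalize q ^ (n - m) = z at *
  have hy : 1 - y⁻¹ = -(1 - y) / y := by field_simp; ring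
  have hz : 1 - z⁻¹ = -(1 - z) / z := by field_simp; ring
  rw [hy, hz]
  field_simp
  ring

lemma sum_qRacahWeight_mul_qpoch (hq : 0 < q) (hq1 : q ≠ 1) (r : ℕ) (hm : 2 * m ≤ n) :
    ∑ x ∈ range (m + 1), qRacahWeight q n x *
        (qpoch (q ^ (-(x : ℤ))) q r * qpoch (q ^ ((x : ℤ) - n - 1)) q r) =
      qbinom q n m * (qpoch (q ^ (-(m : ℤ))) q r * qpoch (q ^ ((m : ℤ) - n)) q r) := by
  induction m with
  | zero =>
    have hint := (qint_pos hq n.succ_ne_zero).ne'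
    rcases r with _ | r
    · simp [qpoch_zero, qRacahWeight, hint]
    · rw [zero_add, sum_range_one, qpoch_zpow_neg_eq_zero hq.ne' r.succ_pos]
      simp only [zero_mul, mul_zero]
  | succ m ih =>
    have hb : ((m + 1 : ℕ) : ℤ) - n - 1 = m - n := by push_cast; ring
    rw [sum_range_succ, ih (by omega), hb, qRacahWeight_succ_mul_qpoch hq hq1 r hm]
    ring

lemma sum_qRacahWeight_mul_hypTerm (hq : 0 < q) (hq1 : q ≠ 1) (M N : ℕ) {r : ℕ} (hm : 2 * m ≤ n)
    (hrm : r ≤ m) :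
    ∑ x ∈ range (m + 1),
        qRacahWeight q n x * hypTerm q n m M N (-(x : ℤ)) ((x : ℤ) - n - 1) r =
      qbinom q n m *
        twoPhiOneTerm (q ^ (-(M : ℤ))) (q ^ (-(N : ℤ))) (q ^ (-(M : ℤ) - N)) q r := by
  have hpoch_m : qpoch (q ^ (-(m : ℤ))) q r ≠ 0 := qpoch_zpow_ne_zero hq hq1 fun i _ => by omega
  have hpoch_n : qpoch (q ^ ((m : ℤ) - n)) q r ≠ 0 := qpoch_zpow_ne_zero hq hq1 fun i _ => by omega
  have hfactor : ∀ x ∈ range (m + 1),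
      qRacahWeight q n x * hypTerm q n m M N (-(x : ℤ)) ((x : ℤ) - n - 1) r =
        twoPhiOneTerm (q ^ (-(M : ℤ))) (q ^ (-(N : ℤ))) (q ^ (-(M : ℤ) - N)) q r /
            (qpoch (q ^ (-(m : ℤ))) q r * qpoch (q ^ ((m : ℤ) - n)) q r) *
          (qRacahWeight q n x *
            (qpoch (q ^ (-(x : ℤ))) q r * qpoch (q ^ ((x : ℤ) - n - 1)) q r)) := by
    intro x _
    rw [hypTerm, twoPhiOneTerm]
    ring
  rw [sum_congr rfl hfactor, ← mul_sum, sum_qRacahWeight_mul_qpoch hq hq1 r hm]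
  field_simp

theorem sum_qRacahWeight_mul_qRacahSeries (hq : 0 < q) (hq1 : q ≠ 1) (N : ℕ) (hm : 2 * m ≤ n)
    (hM : M ≤ m) :
    ∑ x ∈ range (m + 1), qRacahWeight q n x * qRacahSeries q n m M N x =
      qbinom q n m / qbinom q (M + N) M := by
  simp only [qRacahSeries, mul_sum]
  rw [sum_comm, div_eq_mul_inv, ← sum_twoPhiOneTerm_zpow_neg_zpow_neg hq hq1, mul_sum]
  refine sum_congr rfl fun r hr => sum_qRacahWeight_mul_hypTerm hq hq1 M N hm ?_
  rw [mem_range] at hr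
  omega

end TotalMass

lemma pq_eq_qRacahWeight_mul_qRacahSeries {q : ℝ} (hq : q ≠ 0) (n m k l x : ℕ) :
    pq q n m k l x = qbinom q (n - k) (m - l) / qbinom q n m *
      (qRacahWeight q n x * qRacahSeries q n m (m - l) (n + l - m - k) x) := by
  rw [pq, sum_range_min_hypTerm hq, qRacahWeight]
  ring

theorem qRacah_distribution_q_near_one_general
    (n m k l : ℕ) (hm : m ≤ n / 2) (hl : m + k ≤ n + l) (hlm : l ≤ m) (hlk : l ≤ k)
    {q : ℝ} (hq : 0 < q) (hq1 : q ≠ 1) :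
    (∀ x ≤ m, 0 ≤ pq q n m k l x) ∧ ∑ x ∈ Finset.range (m + 1), pq q n m k l x = 1 := by
  have hbinom_MN : 0 < qbinom q (n - k) (m - l) := qbinom_pos hq (by omega)
  have hbinom_nm : 0 < qbinom q n m := qbinom_pos hq (by omega)
  simp only [pq_eq_qRacahWeight_mul_qRacahSeries hq.ne']
  constructor
  · intro x hx
    have hseries : 0 ≤ qRacahSeries q (m + (n - m)) m (m - l) (n + l - m - k) x :=
      qRacahSeries_nonneg hq hq1 (by omega) (by omega) hx (by omega)
    rw [Nat.add_sub_of_le (by omega)] at hseries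
    exact mul_nonneg (div_pos hbinom_MN hbinom_nm).le
      (mul_nonneg (qRacahWeight_nonneg hq (by omega)) hseries)
  · have hMN : m - l + (n + l - m - k) = n - k := by omega
    rw [← mul_sum, sum_qRacahWeight_mul_qRacahSeries hq hq1 _ (by omega) (Nat.sub_le m l), hMN,
      div_mul_div_cancel₀ hbinom_nm.ne', div_self hbinom_MN.ne']

/-- **Main Theorem, case (3): `0 < |q-1|` small (Theorem 5.1).**
For every parameter tuple `(n,m,k,l)` as in the context, there exists `0 < ε < 1` such
that for every real `q` with `0 < |q-1| < ε` and every `x ∈ {0,…,m}` one has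
`p(x;q) ≥ 0`; together with `Σ_{x=0}^{m} p(x;q) = 1`, the function `x ↦ p(x;q)` is
the probability mass function of a probability distribution on `{0,1,…,m}`. -/
theorem qRacah_distribution_q_near_one
    (n m k l : ℕ) (hm : m ≤ n / 2) (hk : k ≤ n)
    (hl : m + k ≤ n + l) (hlm : l ≤ m) (hlk : l ≤ k) :
    ∃ ε : ℝ, 0 < ε ∧ ε < 1 ∧
      ∀ q : ℝ, 0 < |q - 1| → |q - 1| < ε →
        (∀ x ≤ m, 0 ≤ pq q n m k l x) ∧
          ∑ x ∈ Finset.range (m + 1), pq q n m k l x = 1 := by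
  refine ⟨1 / 2, by norm_num, by norm_num, fun q hne hlt => ?_⟩
  have hq : 0 < q := by linarith [(abs_lt.1 hlt).1]
  exact qRacah_distribution_q_near_one_general n m k l hm hl hlm hlk hq
    (sub_ne_zero.1 (abs_pos.1 hne))
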